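/- If α is a real algebraic number with α > 0 and α ≠ 1, and β is a real algebraic number that is not rational (i.e., β is irrational), then the real power α^β is transcendental over ℚ. -/

import Mathlib

/-!
Suppose that `α`, `β` and `α ^ β` lie in a real number field. Siegel's lemma over its integers gives
a nonzero `F x = ∑ l < m, P l (x) * α ^ (l * x)`, with polynomials `P l` of degree less than
`2 * m ^ 3`, which vanishes at the `m ^ 4` points `i + j * β` with `0 ≤ i, j < m ^ 2`. By Rolle's
theorem `F` has fewer than `2 * m ^ 4` real zeros, so `F y ≠ 0` for some `y = i + j * β` with
`0 ≤ i, j < 2 * m ^ 2`. Now `F y` is an algebraic number in a fixed field, and its norm shows that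
`|F y| ≥ m ^ (-O(m ^ 3))`. On the other hand, interpolation at the `m ^ 4` zeros bounds `|F y|` by
`m ^ (-m ^ 4)` times `exp (O(m ^ 4))` times `m ^ O(m ^ 3)`, a contradiction for large `m`. All
estimates stay on the real line: Rolle's theorem replaces the maximum modulus principle.
-/

open Polynomial NumberField Filter Finset
open scoped Nat

section Rolle

variable {f f' : ℝ → ℝ} {s : Set ℝ} {Z : Finset ℝ}

lemma exists_finset_hasDerivAt_eq_zero (hs : s.OrdConnected)
    (hf : ∀ x ∈ s, HasDerivAt f (f' x) x) {n : ℕ} (hcard : #Z = n + 1) (hZs : ↑Z ⊆ s)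
    (hZ : ∀ z ∈ Z, f z = 0) :
    ∃ Z' : Finset ℝ, #Z' = n ∧ ↑Z' ⊆ s ∧ ∀ z ∈ Z', f' z = 0 := by
  set e := Z.orderEmbOfFin hcard
  have he (i) : e i ∈ Z := Z.orderEmbOfFin_mem hcard i
  have hIcc (i : Fin n) : Set.Icc (e i.castSucc) (e i.succ) ⊆ s :=
    hs.out (hZs (he _)) (hZs (he _))
  have rolle (i : Fin n) : ∃ c ∈ Set.Ioo (e i.castSucc) (e i.succ), f' c = 0 :=
    exists_hasDerivAt_eq_zero (e.strictMono i.castSucc_lt_succ)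
      (fun x hx => (hf x (hIcc i hx)).continuousAt.continuousWithinAt)
      ((hZ _ (he _)).trans (hZ _ (he _)).symm)
      (fun x hx => hf x (hIcc i (Set.Ioo_subset_Icc_self hx)))
  choose c hc hc0 using rolle
  have hmono : StrictMono c := fun i j hij => calc
    c i < e i.succ := (hc i).2
    _ ≤ e j.castSucc := e.monotone (Fin.succ_le_castSucc_iff.2 hij)
    _ < c j := (hc j).1
  refine ⟨univ.map ⟨c, hmono.injective⟩, by simp, ?_, by simpa using hc0⟩
  rintro _ hz
  obtain ⟨i, -, rfl⟩ := Finset.mem_map.1 hz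
  exact hIcc i (Set.Ioo_subset_Icc_self (hc i))

lemma exists_iteratedDeriv_eq_zero (hs : s.OrdConnected) {n : ℕ} (hf : ContDiff ℝ n f)
    (hcard : #Z = n + 1) (hZs : ↑Z ⊆ s) (hZ : ∀ z ∈ Z, f z = 0) :
    ∃ x ∈ s, iteratedDeriv n f x = 0 := by
  induction n generalizing f Z with
  | zero =>
    obtain ⟨x, hx⟩ := card_pos.1 (by lia : 0 < #Z)
    exact ⟨x, hZs hx, by simpa using hZ x hx⟩
  | succ n ih =>
    rw [Nat.cast_succ] at hf
    obtain ⟨hdiff, -, hderiv⟩ := contDiff_succ_iff_deriv.1 hf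
    obtain ⟨Z', hcard', hZ's, hZ'⟩ :=
      exists_finset_hasDerivAt_eq_zero hs (fun x _ => (hdiff x).hasDerivAt) hcard hZs hZ
    rw [iteratedDeriv_succ']
    exact ih hderiv hcard' hZ's hZ'

lemma contDiff_polynomial_eval (p : ℝ[X]) {n : WithTop ℕ∞} :
    ContDiff ℝ n (fun x => p.eval x) := by
  simpa [coe_aeval_eq_eval] using p.contDiff_aeval (𝕜 := ℝ) n

lemma iteratedDeriv_polynomial_eval (p : ℝ[X]) (n : ℕ) :
    iteratedDeriv n (fun x => p.eval x) = fun x => (derivative^[n] p).eval x := by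
  induction n with
  | zero => simp
  | succ n ih =>
    ext x
    rw [iteratedDeriv_succ, ih, Polynomial.deriv, Function.iterate_succ_apply']

lemma iterate_derivative_card_prod_X_sub_C (Z : Finset ℝ) :
    derivative^[#Z] (∏ z ∈ Z, (X - C z)) = C ((#Z)! : ℝ) := by
  rw [iterate_derivative_prod_X_sub_C le_rfl]
  simp

/- Rolle is applied to `f - c ∏ (X - z)`, with `c` chosen so that `y` is one more zero. -/
lemma exists_eq_iteratedDeriv_div_factorial_mul_prod (hs : s.OrdConnected)
    (hf : ContDiff ℝ #Z f) (hZs : ↑Z ⊆ s) (hZ : ∀ z ∈ Z, f z = 0) {y : ℝ} (hy : y ∈ s) :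
    ∃ x ∈ s, f y = iteratedDeriv #Z f x / (#Z)! * ∏ z ∈ Z, (y - z) := by
  by_cases hyZ : y ∈ Z
  · exact ⟨y, hy, by rw [hZ y hyZ, prod_eq_zero hyZ (sub_self y), mul_zero]⟩
  set p : ℝ[X] := ∏ z ∈ Z, (X - C z) with hp
  have eval_p (x : ℝ) : p.eval x = ∏ z ∈ Z, (x - z) := by simp [hp, eval_prod]
  have hpy : p.eval y ≠ 0 := by
    rw [eval_p, prod_ne_zero_iff]
    exact fun z hz => sub_ne_zero.2 (ne_of_mem_of_not_mem hz hyZ).symm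
  set c := f y / p.eval y
  have hcp : ContDiff ℝ #Z (fun x => c * p.eval x) :=
    contDiff_const.mul (contDiff_polynomial_eval p)
  obtain ⟨x, hx, hx0⟩ := exists_iteratedDeriv_eq_zero (Z := insert y Z) hs (hf.sub hcp)
    (card_insert_of_notMem hyZ) (by simpa [Set.insert_subset_iff] using ⟨hy, hZs⟩) (by
      intro z hz
      rcases mem_insert.1 hz with rfl | hz
      · exact sub_eq_zero.2 (div_mul_cancel₀ _ hpy).symm
      · simp [hZ z hz, eval_p, prod_eq_zero hz (sub_self z)])
  rw [iteratedDeriv_fun_sub hf.contDiffAt hcp.contDiffAt, iteratedDeriv_const_mul_field,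
    iteratedDeriv_polynomial_eval, iterate_derivative_card_prod_X_sub_C] at hx0
  simp only [eval_C, sub_eq_zero] at hx0
  refine ⟨x, hx, ?_⟩
  rw [hx0, mul_div_cancel_right₀ _ (by positivity), ← eval_p, div_mul_cancel₀ _ hpy]

lemma abs_le_of_forall_abs_iteratedDeriv_le {X M : ℝ} (hf : ContDiff ℝ #Z f)
    (hZX : ∀ z ∈ Z, |z| ≤ X) (hZ : ∀ z ∈ Z, f z = 0)
    (hM : ∀ x, |x| ≤ X → |iteratedDeriv #Z f x| ≤ M) {y : ℝ} (hy : |y| ≤ X) :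
    |f y| ≤ M / (#Z)! * (2 * X) ^ #Z := by
  obtain ⟨x, hx, hfy⟩ := exists_eq_iteratedDeriv_div_factorial_mul_prod Set.ordConnected_Icc hf
    (fun z hz => Set.mem_Icc.2 (abs_le.1 (hZX z hz))) hZ (Set.mem_Icc.2 (abs_le.1 hy))
  have hM0 : 0 ≤ M := (abs_nonneg _).trans (hM y hy)
  have hprod : ∏ z ∈ Z, |y - z| ≤ (2 * X) ^ #Z := by
    rw [← prod_const]
    refine prod_le_prod (fun _ _ => abs_nonneg _) fun z hz => ?_
    linarith [abs_sub y z, hZX z hz]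
  rw [hfy, abs_mul, abs_div, Nat.abs_cast, abs_prod]
  gcongr
  exact hM x (abs_le.2 hx)

end Rolle

section ExpPoly

variable {ι : Type*} [Fintype ι] {w : ι → ℝ} {P : ι → ℝ[X]}

/-- The real exponential polynomial `∑ i, P i (x) * exp (w i * x)`, with coefficients `P` and
frequencies `w`, as a function of `x`. -/
noncomputable def expPoly (w : ι → ℝ) (P : ι → ℝ[X]) (x : ℝ) : ℝ :=
  ∑ i, (P i).eval x * Real.exp (w i * x)

lemma expPoly_sub_frequency (w : ι → ℝ) (P : ι → ℝ[X]) (c x : ℝ) :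
    expPoly (fun i => w i - c) P x = expPoly w P x * Real.exp (-(c * x)) := by
  simp only [expPoly, sum_mul, mul_assoc, ← Real.exp_add]
  exact sum_congr rfl fun i _ => by rw [sub_mul, sub_eq_add_neg]

lemma hasDerivAt_expPoly (w : ι → ℝ) (P : ι → ℝ[X]) (x : ℝ) :
    HasDerivAt (expPoly w P) (expPoly w (fun i => derivative (P i) + C (w i) * P i) x) x := by
  refine HasDerivAt.fun_sum fun i _ => ?_
  have hexp : HasDerivAt (fun x => Real.exp (w i * x)) (Real.exp (w i * x) * w i) x := by
    simpa using ((hasDerivAt_id x).const_mul (w i)).exp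
  refine (((P i).hasDerivAt x).mul hexp).congr_deriv ?_
  simp only [eval_add, eval_mul, eval_C]
  ring

lemma degree_derivative_lt_of_degree_lt_succ {R : Type*} [Semiring R] {p : R[X]} {n : ℕ}
    (hp : p.degree < (n + 1 : ℕ)) : (derivative p).degree < n := by
  rw [degree_lt_iff_coeff_zero] at hp ⊢
  intro k hk
  rw [coeff_derivative, hp (k + 1) (by lia), zero_mul]

lemma eq_zero_of_derivative_add_C_mul_eq_zero {R : Type*} [Ring R] [NoZeroDivisors R] {p : R[X]}
    {a : R} (ha : a ≠ 0) (hp : derivative p + C a * p = 0) : p = 0 := by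
  by_contra hp0
  have hlt := degree_derivative_lt hp0
  rw [eq_neg_of_add_eq_zero_left hp, degree_neg, degree_C_mul ha] at hlt
  exact lt_irrefl _ hlt

lemma expPoly_ne_zero_of_derivative_eq_zero (hw : Function.Injective w) (hP : P ≠ 0) {i₀ : ι}
    (hi₀ : w i₀ = 0) (hderiv : (fun i => derivative (P i) + C (w i) * P i) = 0) (x : ℝ) :
    expPoly w P x ≠ 0 := by
  have hne (i : ι) (hi : i ≠ i₀) : P i = 0 :=
    eq_zero_of_derivative_add_C_mul_eq_zero (fun h => hi (hw (h.trans hi₀.symm)))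
      (congrFun hderiv i)
  have hconst : P i₀ = C ((P i₀).coeff 0) := by
    have h : derivative (P i₀) = 0 := by simpa [hi₀] using congrFun hderiv i₀
    exact eq_C_of_natDegree_eq_zero (derivative_eq_zero.1 h)
  have hP₀ : P i₀ ≠ 0 := fun h => hP (funext fun i => by
    by_cases hi : i = i₀
    · rw [hi, h, Pi.zero_apply]
    · exact hne i hi)
  rw [expPoly, sum_eq_single i₀ (fun i _ hi => by rw [hne i hi, eval_zero, zero_mul]) (by simp),
    hconst, eval_C]
  exact mul_ne_zero (fun h => hP₀ (by rw [hconst, h, C_0])) (Real.exp_ne_zero _)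

/- After normalising a frequency `w i₀` with `P i₀ ≠ 0` to zero, differentiation lowers the degree
of `P i₀` and preserves the other degree bounds, while Rolle loses a single zero. -/
lemma card_zeros_expPoly_lt (hw : Function.Injective w) (hP : P ≠ 0) {d : ι → ℕ}
    (hd : ∀ i, (P i).degree < d i) {Z : Finset ℝ} (hZ : ∀ z ∈ Z, expPoly w P z = 0) :
    #Z < ∑ i, d i := by
  classical
  induction hN : ∑ i, d i generalizing w P d Z with
  | zero =>
    refine absurd (funext fun i => ?_) hP
    have hdi : d i = 0 := by simpa using sum_eq_zero_iff.1 hN i (mem_univ i)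
    simpa [hdi] using hd i
  | succ N ih =>
    obtain ⟨i₀, hi₀⟩ := Function.ne_iff.1 hP
    obtain ⟨k, hk⟩ : ∃ k, d i₀ = k + 1 := Nat.exists_eq_add_one.2 <| by
      simpa using zero_le_degree_iff.2 hi₀ |>.trans_lt (hd i₀)
    set v : ι → ℝ := fun i => w i - w i₀ with hv
    have hv_inj : Function.Injective v := fun i j hij => hw (sub_left_injective hij)
    have hv₀ : v i₀ = 0 := sub_self _
    set Q : ι → ℝ[X] := fun i => derivative (P i) + C (v i) * P i with hQ
    have hvZ (z) (hz : z ∈ Z) : expPoly v P z = 0 := by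
      rw [hv, expPoly_sub_frequency, hZ z hz, zero_mul]
    by_cases hQ0 : Q = 0
    · have hZ_empty : Z = ∅ := eq_empty_of_forall_notMem fun z hz =>
        expPoly_ne_zero_of_derivative_eq_zero hv_inj hP hv₀ hQ0 z (hvZ z hz)
      simp [hZ_empty]
    by_contra! hcard
    obtain ⟨Z₁, hZ₁, hcard₁⟩ := exists_subset_card_eq hcard
    obtain ⟨Z', hcard', -, hZ'⟩ := exists_finset_hasDerivAt_eq_zero Set.ordConnected_univ
      (fun x _ => hasDerivAt_expPoly v P x) hcard₁ (Set.subset_univ _) fun z hz => hvZ z (hZ₁ hz)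
    have hQd (i) : (Q i).degree < Function.update d i₀ k i := by
      rcases eq_or_ne i i₀ with rfl | hi
      · simpa [hQ, hv₀] using degree_derivative_lt_of_degree_lt_succ (hk ▸ hd i)
      · rw [Function.update_of_ne hi]
        simp only [hQ, ← smul_eq_C_mul]
        exact (degree_add_le _ _).trans_lt (max_lt (degree_derivative_le.trans_lt (hd i))
          ((degree_smul_le _ _).trans_lt (hd i)))
    have hsum : ∑ i, Function.update d i₀ k i = N := by
      rw [← add_sum_erase _ _ (mem_univ i₀), hk] at hN
      rw [sum_update_of_mem (mem_univ i₀), sdiff_singleton_eq_erase]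
      lia
    exact (ih hv_inj hQ0 hQd hZ' hsum).ne hcard'

lemma abs_iteratedDeriv_pow_le {X x : ℝ} (hX : 1 ≤ X) (hx : |x| ≤ X) (k i : ℕ) :
    |iteratedDeriv i (fun x : ℝ => x ^ k) x| ≤ k ! * X ^ k := by
  rw [iteratedDeriv_pow, abs_mul, Nat.abs_cast, abs_pow]
  rcases le_or_gt i k with h | h
  · have hfac : k.descFactorial i ≤ k ! :=
      Nat.le_of_dvd k.factorial_pos
        (Dvd.intro_left _ (Nat.factorial_mul_descFactorial h))
    have hpow : |x| ^ (k - i) ≤ X ^ k :=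
      (pow_le_pow_left₀ (abs_nonneg x) hx _).trans (pow_le_pow_right₀ hX (Nat.sub_le k i))
    gcongr
  · rw [Nat.descFactorial_of_lt h, Nat.cast_zero, zero_mul]
    positivity

lemma abs_iteratedDeriv_pow_mul_exp_le {X x a W : ℝ} (hX : 1 ≤ X) (hx : |x| ≤ X) (ha : |a| ≤ W)
    (k n : ℕ) :
    |iteratedDeriv n (fun x => x ^ k * Real.exp (a * x)) x| ≤
      (1 + W) ^ n * (k ! * X ^ k * Real.exp (W * X)) := by
  have hW : 0 ≤ W := (abs_nonneg a).trans ha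
  have hexp : a * x ≤ W * X := (le_abs_self _).trans (by rw [abs_mul]; gcongr)
  rw [iteratedDeriv_fun_mul (by fun_prop) (by fun_prop)]
  calc
    _ ≤ ∑ i ∈ range (n + 1), |n.choose i * iteratedDeriv i (fun x : ℝ => x ^ k) x *
          iteratedDeriv (n - i) (fun x => Real.exp (a * x)) x| := abs_sum_le_sum_abs _ _
    _ ≤ ∑ i ∈ range (n + 1),
          n.choose i * (k ! * X ^ k) * (W ^ (n - i) * Real.exp (W * X)) := by
      gcongr with i
      rw [iteratedDeriv_exp_const_mul, abs_mul, abs_mul, abs_mul, Nat.abs_cast, abs_pow,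
        Real.abs_exp]
      gcongr
      exact abs_iteratedDeriv_pow_le hX hx k i
    _ = (1 + W) ^ n * (k ! * X ^ k * Real.exp (W * X)) := by
      rw [add_pow, sum_mul]
      refine sum_congr rfl fun i _ => ?_
      rw [one_pow]
      ring

lemma expPoly_eq_sum_monomials {L : ℕ} (hP : ∀ i, (P i).degree < L) :
    expPoly w P = fun x =>
      ∑ i, ∑ k : Fin L, (P i).coeff k * (x ^ (k : ℕ) * Real.exp (w i * x)) := by
  ext x
  refine sum_congr rfl fun i _ => ?_
  rw [eval_eq_sum, ← sum_fin (fun k c => c * x ^ k) (by simp) (hP i), sum_mul]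
  simp only [mul_assoc]

lemma contDiff_expPoly (w : ι → ℝ) (P : ι → ℝ[X]) {n : WithTop ℕ∞} : ContDiff ℝ n (expPoly w P) :=
  ContDiff.sum fun i _ => (contDiff_polynomial_eval (P i)).mul (by fun_prop)

lemma abs_iteratedDeriv_expPoly_le {L : ℕ} (hP : ∀ i, (P i).degree < L) {B W X x : ℝ}
    (hB : ∀ i k, |(P i).coeff k| ≤ B) (hW : ∀ i, |w i| ≤ W) (hX : 1 ≤ X) (hx : |x| ≤ X) (n : ℕ) :
    |iteratedDeriv n (expPoly w P) x| ≤
      Fintype.card ι * L * B * ((1 + W) ^ n * (L ! * X ^ L * Real.exp (W * X))) := by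
  rw [expPoly_eq_sum_monomials hP, iteratedDeriv_fun_sum fun i _ => by fun_prop]
  have hterm (i : ι) (k : Fin L) : |iteratedDeriv n
      (fun x => (P i).coeff k * (x ^ (k : ℕ) * Real.exp (w i * x))) x| ≤
      B * ((1 + W) ^ n * (L ! * X ^ L * Real.exp (W * X))) := by
    have hW0 : 0 ≤ W := (abs_nonneg _).trans (hW i)
    rw [iteratedDeriv_const_mul_field, abs_mul]
    refine mul_le_mul (hB i k) ((abs_iteratedDeriv_pow_mul_exp_le hX hx (hW i) k n).trans ?_)
      (abs_nonneg _) ((abs_nonneg _).trans (hB i k))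
    gcongr <;> exact k.2.le
  calc
    _ ≤ ∑ i : ι, ∑ k : Fin L, B * ((1 + W) ^ n * (L ! * X ^ L * Real.exp (W * X))) := by
      refine (abs_sum_le_sum_abs _ _).trans (sum_le_sum fun i _ => ?_)
      rw [iteratedDeriv_fun_sum fun k _ => by fun_prop]
      exact (abs_sum_le_sum_abs _ _).trans (sum_le_sum fun k _ => hterm i k)
    _ = _ := by
      simp only [sum_const, card_univ, Fintype.card_fin, nsmul_eq_mul]
      ring

lemma abs_expPoly_le_of_zeros {L : ℕ} (hP : ∀ i, (P i).degree < L) {B W X : ℝ}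
    (hB : ∀ i k, |(P i).coeff k| ≤ B) (hW : ∀ i, |w i| ≤ W) (hX : 1 ≤ X) {Z : Finset ℝ}
    (hZX : ∀ z ∈ Z, |z| ≤ X) (hZ : ∀ z ∈ Z, expPoly w P z = 0) {y : ℝ} (hy : |y| ≤ X) :
    |expPoly w P y| ≤ Fintype.card ι * L * B *
      ((1 + W) ^ #Z * (L ! * X ^ L * Real.exp (W * X))) / (#Z)! * (2 * X) ^ #Z :=
  abs_le_of_forall_abs_iteratedDeriv_le (contDiff_expPoly w P) hZX hZ
    (fun _ hx => abs_iteratedDeriv_expPoly_le hP hB hW hX hx _) hy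

end ExpPoly

section ClearedHouse

variable {K : Type*} [Field K] [NumberField K] {δ ε : ℤ} {A B : ℝ} {x y : K}

/-- `δ` is a denominator of the algebraic number `x`, and all conjugates of the algebraic integer
`δ * x` have absolute value at most `A`. This is the measure of size in which both Siegel's lemma
and Liouville's inequality are applied. -/
def ClearedHouseLE (δ : ℤ) (A : ℝ) (x : K) : Prop :=
  IsIntegral ℤ ((δ : K) * x) ∧ house ((δ : K) * x) ≤ A

namespace ClearedHouseLE

lemma nonneg (hx : ClearedHouseLE δ A x) : 0 ≤ A :=
  (house_nonneg _).trans hx.2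

lemma mono (hx : ClearedHouseLE δ A x) (hAB : A ≤ B) : ClearedHouseLE δ B x :=
  ⟨hx.1, hx.2.trans hAB⟩

lemma exists_ringOfIntegers_coe_eq (hx : ClearedHouseLE δ A x) : ∃ ξ : 𝓞 K, (ξ : K) = δ * x :=
  ⟨⟨_, hx.1⟩, rfl⟩

lemma of_ringOfIntegers {ξ : 𝓞 K} (hξ : house (ξ : K) ≤ A) : ClearedHouseLE 1 A (ξ : K) :=
  ⟨by simpa using ξ.isIntegral_coe, by simpa using hξ⟩

lemma one (hδ : |(δ : ℝ)| ≤ A) : ClearedHouseLE δ A (1 : K) :=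
  ⟨by simpa using isIntegral_algebraMap (R := ℤ) (A := K) (x := δ),
    by simpa [house_intCast] using hδ⟩

lemma add (hx : ClearedHouseLE δ A x) (hy : ClearedHouseLE δ B y) :
    ClearedHouseLE δ (A + B) (x + y) := by
  rw [ClearedHouseLE, mul_add]
  exact ⟨hx.1.add hy.1, (house_add_le _ _).trans (add_le_add hx.2 hy.2)⟩

lemma sum {ι : Type*} {s : Finset ι} {A : ι → ℝ} {x : ι → K}
    (hx : ∀ i ∈ s, ClearedHouseLE δ (A i) (x i)) :
    ClearedHouseLE δ (∑ i ∈ s, A i) (∑ i ∈ s, x i) := by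
  rw [ClearedHouseLE, mul_sum]
  exact ⟨IsIntegral.sum _ fun i hi => (hx i hi).1,
    (house_sum_le_sum_house _ _).trans (sum_le_sum fun i hi => (hx i hi).2)⟩

lemma mul (hx : ClearedHouseLE δ A x) (hy : ClearedHouseLE ε B y) :
    ClearedHouseLE (δ * ε) (A * B) (x * y) := by
  rw [ClearedHouseLE, Int.cast_mul, mul_mul_mul_comm]
  exact ⟨hx.1.mul hy.1, (house_mul_le _ _).trans
    (mul_le_mul hx.2 hy.2 (house_nonneg _) hx.nonneg)⟩

lemma natCast_mul (hx : ClearedHouseLE δ A x) (n : ℕ) : ClearedHouseLE δ (n * A) (n * x) := by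
  have hn : ClearedHouseLE 1 n (n : K) := by
    simpa using of_ringOfIntegers (K := K) (ξ := n) (by simpa using (house_intCast (K := K) n).le)
  simpa using hn.mul hx

lemma pow (hx : ClearedHouseLE δ A x) (n : ℕ) : ClearedHouseLE (δ ^ n) (A ^ n) (x ^ n) := by
  induction n with
  | zero => simpa using one (K := K) (δ := 1) (A := 1) (by simp)
  | succ n ih => simpa only [pow_succ] using ih.mul hx

lemma pow_of_le (hx : ClearedHouseLE δ A x) (hδ : |(δ : ℝ)| ≤ A) {r L : ℕ} (hr : r ≤ L) :
    ClearedHouseLE (δ ^ L) (A ^ L) (x ^ r) := by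
  simpa only [← pow_add, Nat.add_sub_cancel' hr, one_pow, mul_one] using
    (hx.pow r).mul ((one hδ).pow (L - r))

end ClearedHouseLE

lemma exists_forall_clearedHouseLE (s : Finset K) :
    ∃ d : ℤ, d ≠ 0 ∧ ∃ H : ℝ, |(d : ℝ)| ≤ H ∧ ∀ x ∈ s, ClearedHouseLE d H x := by
  obtain ⟨d, hd, hint⟩ := exists_integral_multiples ℤ ℚ s
  have hsum (x : K) : 0 ≤ house ((d : K) * x) := house_nonneg _
  refine ⟨d, hd, |(d : ℝ)| + ∑ x ∈ s, house ((d : K) * x),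
    le_add_of_nonneg_right (sum_nonneg fun x _ => hsum x), fun x hx => ⟨?_, ?_⟩⟩
  · simpa only [zsmul_eq_mul] using hint x hx
  · exact (single_le_sum (f := fun x => house ((d : K) * x)) (fun x _ => hsum x) hx).trans
      (le_add_of_nonneg_left (abs_nonneg _))

lemma one_le_norm_norm_of_ne_zero {ξ : 𝓞 K} (hξ : ξ ≠ 0) : 1 ≤ ‖Algebra.norm ℚ (ξ : K)‖ := by
  rw [← Algebra.coe_norm_int, ← Rat.norm_cast_real, Rat.cast_intCast, Real.norm_eq_abs]
  exact_mod_cast Int.one_le_abs (Algebra.norm_ne_zero_iff.2 hξ)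

lemma abs_embedding_le_house (σ : K →+* ℝ) (x : K) : |σ x| ≤ house x := by
  simpa using norm_embedding_le_house x (Complex.ofRealHom.comp σ)

lemma ClearedHouseLE.one_le_mul_abs_embedding (hx : ClearedHouseLE δ A x) (hδ : δ ≠ 0)
    (hx0 : x ≠ 0) (σ : K →+* ℝ) :
    1 ≤ |(δ : ℝ)| * |σ x| * A ^ (Module.finrank ℚ K - 1) := by
  obtain ⟨ξ, hξ⟩ := hx.exists_ringOfIntegers_coe_eq
  have hξ0 : ξ ≠ 0 := by
    rintro rfl
    exact mul_ne_zero (Int.cast_ne_zero.2 hδ) hx0 (hξ.symm.trans (map_zero _))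
  have hσ : ‖Complex.ofRealHom.comp σ (δ * x)‖ = |(δ : ℝ)| * |σ x| := by simp
  calc
    1 ≤ ‖Algebra.norm ℚ (δ * x : K)‖ := hξ ▸ one_le_norm_norm_of_ne_zero hξ0
    _ ≤ |(δ : ℝ)| * |σ x| * house (δ * x : K) ^ (Module.finrank ℚ K - 1) :=
      hσ ▸ norm_norm_le_norm_mul_house_pow _ _
    _ ≤ |(δ : ℝ)| * |σ x| * A ^ (Module.finrank ℚ K - 1) := by
      gcongr
      exacts [house_nonneg _, hx.2]

variable (K) in
lemma exists_const_siegel.{u, v} :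
    ∃ C : ℝ, ∀ {ρ : Type u} {ι : Type v} [Fintype ρ] [Fintype ι]
      (M : Matrix ρ ι (𝓞 K)) {A : ℝ},
      0 < Fintype.card ρ → Fintype.card ι = 2 * Fintype.card ρ → 1 ≤ A →
      (∀ i j, house (M i j : K) ≤ A) →
      ∃ ξ : ι → 𝓞 K, ξ ≠ 0 ∧ M.mulVec ξ = 0 ∧
        ∀ j, house (ξ j : K) ≤ C * Fintype.card ρ * A := by
  classical
  obtain ⟨c, hc⟩ : ∃ c : ℝ, ∀ {ρ : Type u} {ι : Type v} [Fintype ρ] [Fintype ι]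
      (M : Matrix ρ ι (𝓞 K)) {p q : ℕ} {A : ℝ},
      M ≠ 0 → 0 < p → p < q → Fintype.card ι = q → Fintype.card ρ = p →
      (∀ i j, house (M i j : K) ≤ A) → ∃ ξ : ι → 𝓞 K, ξ ≠ 0 ∧ M.mulVec ξ = 0 ∧
        ∀ j, house (ξ j : K) ≤ c * (c * q * A) ^ ((p : ℝ) / (q - p)) :=
    ⟨_, fun M _ _ _ hM hp hpq hι hρ hA =>
      house.exists_ne_zero_int_vec_house_le K M hM hp hpq hι hA hρ⟩
  refine ⟨max 1 (2 * c ^ 2), fun {ρ ι} _ _ M A hρ hι hA1 hA => ?_⟩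
  have hρ1 : (1 : ℝ) ≤ Fintype.card ρ := by exact_mod_cast hρ
  have : Nonempty ι := Fintype.card_pos_iff.1 (by lia)
  obtain rfl | hM := eq_or_ne M 0
  · refine ⟨1, one_ne_zero, Matrix.zero_mulVec _, fun _ => ?_⟩
    calc
      house ((1 : 𝓞 K) : K) ≤ 1 * 1 * 1 := by simpa using (house_intCast (K := K) 1).le
      _ ≤ max 1 (2 * c ^ 2) * Fintype.card ρ * A := by
        gcongr
        exact le_max_left _ _
  · obtain ⟨ξ, hξ0, hMξ, hξ⟩ := hc M hM hρ (by lia) hι rfl hA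
    refine ⟨ξ, hξ0, hMξ, fun j => (hξ j).trans ?_⟩
    have hexp : (Fintype.card ρ : ℝ) / ((2 * Fintype.card ρ : ℕ) - Fintype.card ρ) = 1 := by
      push_cast
      rw [two_mul, add_sub_cancel_right, div_self (by positivity)]
    calc
      _ = 2 * c ^ 2 * Fintype.card ρ * A := by
        rw [hexp, Real.rpow_one]
        push_cast
        ring
      _ ≤ max 1 (2 * c ^ 2) * Fintype.card ρ * A := by
        gcongr
        exact le_max_right _ _

variable (K) in
lemma exists_const_siegel_of_clearedHouseLE.{u, v} :
    ∃ C : ℝ, ∀ {ρ : Type u} {ι : Type v} [Fintype ρ] [Fintype ι]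
      (M : ρ → ι → K) {δ : ℤ} {A : ℝ},
      0 < Fintype.card ρ → Fintype.card ι = 2 * Fintype.card ρ → δ ≠ 0 → 1 ≤ A →
      (∀ i j, ClearedHouseLE δ A (M i j)) →
      ∃ ξ : ι → 𝓞 K, ξ ≠ 0 ∧ (∀ i, ∑ j, M i j * ξ j = 0) ∧
        ∀ j, house (ξ j : K) ≤ C * Fintype.card ρ * A := by
  obtain ⟨C, hC⟩ := exists_const_siegel K
  refine ⟨C, fun M δ A hρ hι hδ hA1 hM => ?_⟩
  choose M' hM' using fun i j => (hM i j).exists_ringOfIntegers_coe_eq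
  obtain ⟨ξ, hξ0, hM'ξ, hξ⟩ := hC M' hρ hι hA1 fun i j => hM' i j ▸ (hM i j).2
  refine ⟨ξ, hξ0, fun i => ?_, hξ⟩
  have h : (δ : K) * ∑ j, M i j * ξ j = 0 := by
    simpa [Matrix.mulVec, dotProduct, mul_sum, hM', mul_assoc] using
      congrArg (algebraMap (𝓞 K) K) (congrFun hM'ξ i)
  exact (mul_eq_zero.1 h).resolve_left (Int.cast_ne_zero.2 hδ)

end ClearedHouse

section Grid

/-- The index set of the interpolation points `i + j * θ` with `0 ≤ i, j < n`. -/
def grid (n : ℕ) : Finset (ℕ × ℕ) :=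
  range n ×ˢ range n

/-- The real number `i + j * θ` attached to the pair `p = (i, j)`. -/
def gridPoint (θ : ℝ) (p : ℕ × ℕ) : ℝ :=
  p.1 + p.2 * θ

lemma mem_grid {n : ℕ} {p : ℕ × ℕ} : p ∈ grid n ↔ p.1 < n ∧ p.2 < n := by
  simp [grid]

lemma card_grid (n : ℕ) : #(grid n) = n ^ 2 := by
  simp [grid, sq]

lemma grid_mono {m n : ℕ} (h : m ≤ n) : grid m ⊆ grid n :=
  product_subset_product (range_mono h) (range_mono h)

lemma gridPoint_injective {θ : ℝ} (hθ : Irrational θ) : Function.Injective (gridPoint θ) := by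
  rintro ⟨i, j⟩ ⟨i', j'⟩ h
  simp only [gridPoint] at h
  have hj : j = j' := by
    by_contra hne
    have hsub : (j : ℝ) - j' ≠ 0 := sub_ne_zero.2 (Nat.cast_injective.ne hne)
    refine hθ.ne_rat ((i' - i) / (j - j')) ?_
    push_cast
    rw [eq_div_iff hsub]
    linarith
  subst hj
  simpa using h

lemma abs_gridPoint_le (θ : ℝ) {n : ℕ} {p : ℕ × ℕ} (hp : p ∈ grid n) :
    |gridPoint θ p| ≤ n * (1 + |θ|) := by
  have h₁ : (p.1 : ℝ) ≤ n := by exact_mod_cast (mem_grid.1 hp).1.le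
  have h₂ : (p.2 : ℝ) ≤ n := by exact_mod_cast (mem_grid.1 hp).2.le
  calc
    |gridPoint θ p| ≤ |(p.1 : ℝ)| + |p.2 * θ| := abs_add_le _ _
    _ = p.1 + p.2 * |θ| := by rw [abs_mul, Nat.abs_cast, Nat.abs_cast]
    _ ≤ n + n * |θ| := by gcongr
    _ = n * (1 + |θ|) := by ring

variable {K : Type*} [Field K]

/-- For `g = a ^ b`, the value of `z ^ k * a ^ (l * z)` at the grid point `z = i + j * b`, written
as an element of the field generated by `a`, `b` and `g`. -/
def gridValue (a b g : K) (p : ℕ × ℕ) (k l : ℕ) : K :=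
  (p.1 + p.2 * b) ^ k * (a ^ (l * p.1) * g ^ (l * p.2))

lemma map_gridValue {σ : K →+* ℝ} {a b g : K} (ha : 0 < σ a) (hg : σ g = σ a ^ σ b) (p : ℕ × ℕ)
    (k l : ℕ) :
    σ (gridValue a b g p k l) =
      gridPoint (σ b) p ^ k * Real.exp (l * Real.log (σ a) * gridPoint (σ b) p) := by
  have hexp : σ a ^ (l * p.1) * σ g ^ (l * p.2) =
      Real.exp (l * Real.log (σ a) * gridPoint (σ b) p) := by
    rw [hg, Real.rpow_def_of_pos ha, ← Real.exp_nat_mul]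
    nth_rw 1 [← Real.exp_log ha]
    rw [← Real.exp_nat_mul, ← Real.exp_add]
    congr 1
    simp only [gridPoint]
    push_cast
    ring
  simp [gridValue, hexp, gridPoint]

lemma clearedHouseLE_gridValue [NumberField K] {a b g : K} {d : ℤ} {H : ℝ} (hd : |(d : ℝ)| ≤ H)
    (ha : ClearedHouseLE d H a) (hb : ClearedHouseLE d H b) (hg : ClearedHouseLE d H g)
    {n L k l : ℕ} {p : ℕ × ℕ} (hp : p ∈ grid n) (hk : k ≤ L) (hl : l * n ≤ L) :
    ClearedHouseLE (d ^ (3 * L)) ((2 * n * H ^ 3) ^ L) (gridValue a b g p k l) := by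
  obtain ⟨hp₁, hp₂⟩ := mem_grid.1 hp
  have hH : 0 ≤ H := (abs_nonneg _).trans hd
  have hn : (1 : ℝ) ≤ n := by exact_mod_cast hp₁.bot_lt
  have hpoint : ClearedHouseLE d (2 * n * H) (p.1 + p.2 * b) := by
    have h₁ : (p.1 : ℝ) ≤ n := by exact_mod_cast hp₁.le
    have h₂ : (p.2 : ℝ) ≤ n := by exact_mod_cast hp₂.le
    have hadd := ((ClearedHouseLE.one hd).natCast_mul p.1).add (hb.natCast_mul p.2)
    rw [mul_one] at hadd
    refine hadd.mono ?_
    calc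
      p.1 * H + p.2 * H ≤ n * H + n * H := by gcongr
      _ = 2 * n * H := by ring
  have hpow_le {i : ℕ} (hi : i ≤ n) : l * i ≤ L := (Nat.mul_le_mul_left l hi).trans hl
  have hpow := ((hpoint.pow_of_le (by nlinarith) hk).mul
    ((ha.pow_of_le hd (hpow_le hp₁.le)).mul
      (hg.pow_of_le hd (hpow_le hp₂.le))))
  rw [gridValue]
  convert hpow using 1 <;> ring

end Grid

section Growth

lemma eventually_pow_mul_pow_lt_pow (G : ℝ) (c : ℕ) :
    ∀ᶠ m : ℕ in atTop, G ^ m ^ 4 * (m : ℝ) ^ (c * m ^ 3) < (m : ℝ) ^ m ^ 4 := by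
  filter_upwards [tendsto_natCast_atTop_atTop.eventually_gt_atTop (G ^ 2),
    eventually_ge_atTop (2 * c + 1)] with m hGm hcm
  have hm : m ≠ 0 := by lia
  have hm1 : (1 : ℝ) ≤ m := by exact_mod_cast hm.bot_lt
  refine lt_of_pow_lt_pow_left₀ 2 (by positivity) ?_
  calc
    (G ^ m ^ 4 * (m : ℝ) ^ (c * m ^ 3)) ^ 2 = (G ^ 2) ^ m ^ 4 * (m : ℝ) ^ (2 * c * m ^ 3) := by
      ring
    _ ≤ (G ^ 2) ^ m ^ 4 * (m : ℝ) ^ m ^ 4 := by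
      gcongr
      calc
        2 * c * m ^ 3 ≤ m * m ^ 3 := by gcongr; lia
        _ = m ^ 4 := by ring
    _ < (m : ℝ) ^ m ^ 4 * (m : ℝ) ^ m ^ 4 := by gcongr
    _ = ((m : ℝ) ^ m ^ 4) ^ 2 := by ring

lemma natCast_pow_self_div_factorial_le (n : ℕ) : (n : ℝ) ^ n / n ! ≤ Real.exp 1 ^ n := by
  simpa only [Real.exp_one_pow] using Real.pow_div_factorial_le_exp (n : ℝ) n.cast_nonneg n

lemma analytic_factor_le {B W : ℝ} (hB : 0 ≤ B) (hW : 0 ≤ W) {m : ℕ} (hm : 1 ≤ m) :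
    (1 + W * m) ^ m ^ 4 * (2 * (m ^ 2 * B)) ^ m ^ 4 / (m ^ 4)! * (m : ℝ) ^ m ^ 4 ≤
      (2 * B * (1 + W) * Real.exp 1) ^ m ^ 4 := by
  have hm1 : (1 : ℝ) ≤ m := by exact_mod_cast hm
  calc
    _ ≤ ((1 + W) * m) ^ m ^ 4 * (2 * (m ^ 2 * B)) ^ m ^ 4 / (m ^ 4)! * (m : ℝ) ^ m ^ 4 := by
      gcongr
      linarith
    _ = (2 * B * (1 + W)) ^ m ^ 4 * (((m ^ 4 : ℕ) : ℝ) ^ m ^ 4 / (m ^ 4)!) := by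
      rw [div_mul_eq_mul_div, mul_div_assoc', ← mul_pow, ← mul_pow, ← mul_pow]
      push_cast
      ring_nf
    _ ≤ (2 * B * (1 + W)) ^ m ^ 4 * Real.exp 1 ^ m ^ 4 := by
      gcongr
      exact natCast_pow_self_div_factorial_le _
    _ = _ := (mul_pow _ _ _).symm

lemma eventually_arithmetic_factor_le {B : ℝ} (hB : 0 ≤ B) (W : ℝ) (c : ℕ) :
    ∀ᶠ m : ℕ in atTop, m * (2 * m ^ 3 : ℕ) * (m : ℝ) ^ (c * m ^ 3) *
      ((2 * m ^ 3)! * (m ^ 2 * B) ^ (2 * m ^ 3) * Real.exp (W * m * (m ^ 2 * B))) ≤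
      (m : ℝ) ^ ((c + 20) * m ^ 3) := by
  filter_upwards [eventually_ge_atTop 2, tendsto_natCast_atTop_atTop.eventually_ge_atTop B,
    tendsto_natCast_atTop_atTop.eventually_ge_atTop (Real.exp (W * B))] with m hm hBm hexpm
  have hm0 : m ≠ 0 := by lia
  have : (1 : ℝ) ≤ m := by exact_mod_cast hm0.bot_lt
  have htwo : 2 * m ^ 3 ≤ m ^ 4 := by nlinarith [pow_pos hm0.bot_lt 3]
  have hcard : (m : ℝ) * (2 * m ^ 3 : ℕ) ≤ (m : ℝ) ^ (5 * m ^ 3) := by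
    exact_mod_cast calc
      m * (2 * m ^ 3) ≤ m * m ^ 4 := by gcongr
      _ = m ^ 5 := by ring
      _ ≤ m ^ (5 * m ^ 3) := pow_le_pow_right₀ hm0.bot_lt (by nlinarith [pow_pos hm0.bot_lt 3])
  have hfac : ((2 * m ^ 3)! : ℝ) ≤ (m : ℝ) ^ (8 * m ^ 3) := by
    exact_mod_cast calc
      (2 * m ^ 3)! ≤ (2 * m ^ 3) ^ (2 * m ^ 3) := Nat.factorial_le_pow _
      _ ≤ (m ^ 4) ^ (2 * m ^ 3) := by gcongr
      _ = m ^ (8 * m ^ 3) := by ring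
  have hpow : (m ^ 2 * B) ^ (2 * m ^ 3) ≤ (m : ℝ) ^ (6 * m ^ 3) := calc
    (m ^ 2 * B) ^ (2 * m ^ 3) ≤ ((m : ℝ) ^ 2 * m) ^ (2 * m ^ 3) := by gcongr
    _ = (m : ℝ) ^ (6 * m ^ 3) := by ring
  have hexp : Real.exp (W * m * (m ^ 2 * B)) ≤ (m : ℝ) ^ m ^ 3 := calc
    Real.exp (W * m * (m ^ 2 * B)) = Real.exp (W * B) ^ m ^ 3 := by
      rw [← Real.exp_nat_mul]
      push_cast
      ring_nf
    _ ≤ (m : ℝ) ^ m ^ 3 := by gcongr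
  calc
    _ ≤ (m : ℝ) ^ (5 * m ^ 3) * (m : ℝ) ^ (c * m ^ 3) *
          ((m : ℝ) ^ (8 * m ^ 3) * (m : ℝ) ^ (6 * m ^ 3) * (m : ℝ) ^ m ^ 3) := by gcongr
    _ = (m : ℝ) ^ ((c + 20) * m ^ 3) := by ring

end Growth

section Auxiliary

/-- The properties of the auxiliary function `F x = ∑ l < m, P l (x) * exp (l * w * x)` of the
Gelfond–Schneider method, with all orders of magnitude expressed as powers of `m ^ m ^ 3`: `F` is
a nonzero exponential polynomial with coefficients of controlled size, it vanishes at the `m ^ 4`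
points of a grid, and its nonzero values at the `4 * m ^ 4` points of a larger grid are bounded
below. -/
structure IsAuxiliary (θ w : ℝ) (c m : ℕ) (P : Fin m → ℝ[X]) : Prop where
  ne_zero : P ≠ 0
  degree_lt : ∀ l, (P l).degree < (2 * m ^ 3 : ℕ)
  abs_coeff_le : ∀ l k, |(P l).coeff k| ≤ (m : ℝ) ^ (c * m ^ 3)
  eq_zero : ∀ p ∈ grid (m ^ 2), expPoly (fun l : Fin m => l * w) P (gridPoint θ p) = 0
  one_le : ∀ p ∈ grid (2 * m ^ 2), expPoly (fun l : Fin m => l * w) P (gridPoint θ p) ≠ 0 →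
    1 ≤ (m : ℝ) ^ (c * m ^ 3) * |expPoly (fun l : Fin m => l * w) P (gridPoint θ p)|

namespace IsAuxiliary

variable {θ w : ℝ} {c m : ℕ} {P : Fin m → ℝ[X]}

lemma exists_ne_zero (hP : IsAuxiliary θ w c m P) (hθ : Irrational θ) (hw : w ≠ 0) :
    ∃ p ∈ grid (2 * m ^ 2), expPoly (fun l : Fin m => l * w) P (gridPoint θ p) ≠ 0 := by
  by_contra! hzero
  have hinj : Function.Injective (fun l : Fin m => (l : ℝ) * w) := fun l l' h =>
    Fin.ext (Nat.cast_injective (mul_right_cancel₀ hw h))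
  have hlt := card_zeros_expPoly_lt hinj hP.ne_zero hP.degree_lt
    (Z := (grid (2 * m ^ 2)).image (gridPoint θ)) (by simpa only [forall_mem_image] using hzero)
  rw [card_image_of_injective _ (gridPoint_injective hθ), card_grid, sum_const, card_univ,
    Fintype.card_fin, smul_eq_mul] at hlt
  nlinarith

lemma abs_expPoly_le (hP : IsAuxiliary θ w c m P) (hθ : Irrational θ) (hm : 1 ≤ m)
    {p : ℕ × ℕ} (hp : p ∈ grid (2 * m ^ 2)) :
    |expPoly (fun l : Fin m => l * w) P (gridPoint θ p)| ≤
      m * (2 * m ^ 3 : ℕ) * (m : ℝ) ^ (c * m ^ 3) * ((1 + |w| * m) ^ m ^ 4 *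
        ((2 * m ^ 3)! * (m ^ 2 * (2 * (1 + |θ|))) ^ (2 * m ^ 3) *
          Real.exp (|w| * m * (m ^ 2 * (2 * (1 + |θ|)))))) / (m ^ 4)! *
            (2 * (m ^ 2 * (2 * (1 + |θ|)))) ^ m ^ 4 := by
  have hm1 : (1 : ℝ) ≤ m := by exact_mod_cast hm
  have hX {q : ℕ × ℕ} (hq : q ∈ grid (2 * m ^ 2)) :
      |gridPoint θ q| ≤ m ^ 2 * (2 * (1 + |θ|)) := by
    refine (abs_gridPoint_le θ hq).trans_eq ?_
    push_cast
    ring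
  have hcard : #((grid (m ^ 2)).image (gridPoint θ)) = m ^ 4 := by
    rw [card_image_of_injective _ (gridPoint_injective hθ), card_grid, ← pow_mul]
  have hW (l : Fin m) : |(l : ℝ) * w| ≤ |w| * m := by
    rw [abs_mul, Nat.abs_cast, mul_comm]
    gcongr
    exact l.2.le
  have hX1 : 1 ≤ (m : ℝ) ^ 2 * (2 * (1 + |θ|)) := by
    nlinarith [one_le_pow₀ hm1 (n := 2), abs_nonneg θ]
  have h := abs_expPoly_le_of_zeros hP.degree_lt hP.abs_coeff_le hW hX1
    (forall_mem_image.2 fun q hq => hX (grid_mono (by lia) hq))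
    (forall_mem_image.2 hP.eq_zero) (hX hp)
  rwa [hcard, Fintype.card_fin] at h

end IsAuxiliary

lemma eventually_not_isAuxiliary {θ w : ℝ} (hθ : Irrational θ) (hw : w ≠ 0) (c : ℕ) :
    ∀ᶠ m : ℕ in atTop, ∀ P : Fin m → ℝ[X], ¬ IsAuxiliary θ w c m P := by
  have hB : 0 ≤ 2 * (1 + |θ|) := by positivity
  set B : ℝ := 2 * (1 + |θ|)
  set G : ℝ := 2 * B * (1 + |w|) * Real.exp 1
  filter_upwards [eventually_ge_atTop 1, eventually_arithmetic_factor_le hB |w| c,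
    eventually_pow_mul_pow_lt_pow G (2 * c + 20)]
    with m hm harith hgrowth P hP
  obtain ⟨p, hp, hne⟩ := hP.exists_ne_zero hθ hw
  refine hgrowth.not_ge ?_
  calc
    (m : ℝ) ^ m ^ 4 ≤ (m : ℝ) ^ (c * m ^ 3) *
        |expPoly (fun l : Fin m => l * w) P (gridPoint θ p)| * (m : ℝ) ^ m ^ 4 :=
      le_mul_of_one_le_left (by positivity) (hP.one_le p hp hne)
    _ ≤ (m : ℝ) ^ (c * m ^ 3) * (m * (2 * m ^ 3 : ℕ) * (m : ℝ) ^ (c * m ^ 3) *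
          ((1 + |w| * m) ^ m ^ 4 * ((2 * m ^ 3)! * (m ^ 2 * B) ^ (2 * m ^ 3) *
            Real.exp (|w| * m * (m ^ 2 * B)))) / (m ^ 4)! * (2 * (m ^ 2 * B)) ^ m ^ 4) *
          (m : ℝ) ^ m ^ 4 := by
      gcongr
      exact hP.abs_expPoly_le hθ hm hp
    _ = (m : ℝ) ^ (c * m ^ 3) *
          ((1 + |w| * m) ^ m ^ 4 * (2 * (m ^ 2 * B)) ^ m ^ 4 / (m ^ 4)! * (m : ℝ) ^ m ^ 4) *
          (m * (2 * m ^ 3 : ℕ) * (m : ℝ) ^ (c * m ^ 3) *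
            ((2 * m ^ 3)! * (m ^ 2 * B) ^ (2 * m ^ 3) * Real.exp (|w| * m * (m ^ 2 * B)))) := by
      ring
    _ ≤ (m : ℝ) ^ (c * m ^ 3) * G ^ m ^ 4 * (m : ℝ) ^ ((c + 20) * m ^ 3) := by
      gcongr
      exact analytic_factor_le hB (abs_nonneg w) hm
    _ = G ^ m ^ 4 * (m : ℝ) ^ ((2 * c + 20) * m ^ 3) := by ring

end Auxiliary

section Existence

variable {K : Type*} [Field K]

/-- The value at the grid point `z = i + j * b` of the exponential polynomial
`∑ k l, ξ (k, l) * z ^ k * a ^ (l * z)`, as an element of the number field. -/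
def gridSum (a b g : K) {L n : ℕ} (ξ : Fin L × Fin n → 𝓞 K) (p : ℕ × ℕ) : K :=
  ∑ q, gridValue a b g p q.1 q.2 * ξ q

/-- The real polynomial in `z` whose coefficients are the images under the real embedding `σ` of
the coefficients of `a ^ (l * z)` in `∑ k l, ξ (k, l) * z ^ k * a ^ (l * z)`. -/
noncomputable def conjugatePoly (σ : K →+* ℝ) {L n : ℕ} (ξ : Fin L × Fin n → 𝓞 K) (l : Fin n) :
    ℝ[X] :=
  ofFn L fun k => σ (ξ (k, l))

lemma conjugatePoly_ne_zero (σ : K →+* ℝ) {L n : ℕ} {ξ : Fin L × Fin n → 𝓞 K} (hξ : ξ ≠ 0) :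
    conjugatePoly σ ξ ≠ 0 := by
  obtain ⟨⟨k, l⟩, hkl⟩ := Function.ne_iff.1 hξ
  intro h
  have hcoeff : (conjugatePoly σ ξ l).coeff k = σ (ξ (k, l)) :=
    ofFn_coeff_eq_val_of_lt _ k.2
  rw [h, Pi.zero_apply, coeff_zero, eq_comm, map_eq_zero] at hcoeff
  exact hkl (RingOfIntegers.coe_eq_zero_iff.1 hcoeff)

lemma map_gridSum {σ : K →+* ℝ} {a b g : K} (ha : 0 < σ a) (hg : σ g = σ a ^ σ b) {L n : ℕ}
    (ξ : Fin L × Fin n → 𝓞 K) (p : ℕ × ℕ) :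
    σ (gridSum a b g ξ p) = expPoly (fun l : Fin n => l * Real.log (σ a)) (conjugatePoly σ ξ)
      (gridPoint (σ b) p) := by
  simp only [gridSum, expPoly, conjugatePoly, ofFn_eq_sum_monomial, eval_finsetSum, eval_monomial,
    map_sum, map_mul, map_gridValue ha hg, Fintype.sum_prod_type_right, sum_mul]
  refine sum_congr rfl fun l _ => sum_congr rfl fun k _ => ?_
  ring

variable [NumberField K]

lemma abs_coeff_conjugatePoly_le (σ : K →+* ℝ) {L n : ℕ} {ξ : Fin L × Fin n → 𝓞 K} {A : ℝ}
    (hA : 0 ≤ A) (hξ : ∀ q, house (ξ q : K) ≤ A) (l : Fin n) (k : ℕ) :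
    |(conjugatePoly σ ξ l).coeff k| ≤ A := by
  rcases lt_or_ge k L with hk | hk
  · rw [conjugatePoly, ofFn_coeff_eq_val_of_lt _ hk]
    exact (abs_embedding_le_house σ _).trans (hξ _)
  · rwa [conjugatePoly, ofFn_coeff_eq_zero_of_ge _ hk, abs_zero]

lemma exists_eventually_clearedHouseLE_gridValue (a b g : K) :
    ∃ d : ℤ, d ≠ 0 ∧ ∀ᶠ m : ℕ in atTop, |(d : ℝ)| ≤ m ∧
      ∀ p ∈ grid (2 * m ^ 2), ∀ k ≤ 2 * m ^ 3, ∀ l ≤ m,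
        ClearedHouseLE (d ^ (6 * m ^ 3)) ((m : ℝ) ^ (12 * m ^ 3)) (gridValue a b g p k l) := by
  classical
  obtain ⟨d, hd, H, hdH, hH⟩ := exists_forall_clearedHouseLE {a, b, g}
  refine ⟨d, hd, ?_⟩
  filter_upwards [tendsto_natCast_atTop_atTop.eventually_ge_atTop H, eventually_ge_atTop 4]
    with m hHm hm
  refine ⟨hdH.trans hHm, fun p hp k hk l hl => ?_⟩
  have hH0 : 0 ≤ H := (abs_nonneg _).trans hdH
  have hm4 : (4 : ℝ) ≤ m := by exact_mod_cast hm
  have hlm : l * (2 * m ^ 2) ≤ 2 * m ^ 3 := calc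
    l * (2 * m ^ 2) ≤ m * (2 * m ^ 2) := by gcongr
    _ = 2 * m ^ 3 := by ring
  have hvalue := clearedHouseLE_gridValue hdH (hH a (by simp)) (hH b (by simp)) (hH g (by simp))
    hp hk hlm
  rw [← mul_assoc] at hvalue
  refine hvalue.mono ?_
  calc
    (2 * (2 * m ^ 2 : ℕ) * H ^ 3) ^ (2 * m ^ 3) = (4 * m ^ 2 * H ^ 3) ^ (2 * m ^ 3) := by
      push_cast
      ring
    _ ≤ ((m : ℝ) * m ^ 2 * m ^ 3) ^ (2 * m ^ 3) := by gcongr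
    _ = (m : ℝ) ^ (12 * m ^ 3) := by ring

lemma clearedHouseLE_gridSum {a b g : K} {L n : ℕ} {ξ : Fin L × Fin n → 𝓞 K} {p : ℕ × ℕ} {δ : ℤ}
    {A B : ℝ} (hξ : ∀ q, house (ξ q : K) ≤ B)
    (hA : ∀ k ≤ L, ∀ l ≤ n, ClearedHouseLE δ A (gridValue a b g p k l)) :
    ClearedHouseLE δ (L * n * (A * B)) (gridSum a b g ξ p) := by
  have h := ClearedHouseLE.sum (s := univ) fun (q : Fin L × Fin n) _ =>
    (hA q.1 q.1.2.le q.2 q.2.2.le).mul (.of_ringOfIntegers (hξ q))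
  simpa [gridSum] using h

variable (K) in
lemma eventually_exists_gridSum_eq_zero :
    ∀ᶠ m : ℕ in atTop, ∀ (a b g : K) {δ : ℤ} {A : ℝ}, δ ≠ 0 → 1 ≤ A →
      (∀ p ∈ grid (m ^ 2), ∀ k ≤ 2 * m ^ 3, ∀ l ≤ m, ClearedHouseLE δ A (gridValue a b g p k l)) →
      ∃ ξ : Fin (2 * m ^ 3) × Fin m → 𝓞 K, ξ ≠ 0 ∧ (∀ p ∈ grid (m ^ 2), gridSum a b g ξ p = 0) ∧
        ∀ q, house (ξ q : K) ≤ m ^ 5 * A := by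
  obtain ⟨C, hC⟩ := exists_const_siegel_of_clearedHouseLE K
  filter_upwards [tendsto_natCast_atTop_atTop.eventually_ge_atTop C, eventually_ge_atTop 1]
    with m hCm hm a b g δ A hδ hA1 hA
  have hcard : Fintype.card (grid (m ^ 2)) = m ^ 4 := by
    rw [Fintype.card_coe, card_grid, ← pow_mul]
  obtain ⟨ξ, hξ0, hsum, hξ⟩ := hC
    (fun (p : grid (m ^ 2)) (q : Fin (2 * m ^ 3) × Fin m) => gridValue a b g p q.1 q.2)
    (by rw [hcard]; positivity)
    (by rw [hcard, Fintype.card_prod, Fintype.card_fin, Fintype.card_fin]; ring) hδ hA1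
    fun p q => hA p p.2 q.1 q.1.2.le q.2 q.2.2.le
  refine ⟨ξ, hξ0, fun p hp => hsum ⟨p, hp⟩, fun q => (hξ q).trans ?_⟩
  rw [hcard]
  calc
    C * (m ^ 4 : ℕ) * A ≤ m * (m ^ 4 : ℕ) * A := by gcongr
    _ = m ^ 5 * A := by
      push_cast
      ring

lemma exists_eventually_exists_coeffs (a b g : K) :
    ∃ d : ℤ, d ≠ 0 ∧ ∀ᶠ m : ℕ in atTop, |(d : ℝ)| ≤ m ∧
      ∃ ξ : Fin (2 * m ^ 3) × Fin m → 𝓞 K, ξ ≠ 0 ∧ (∀ p ∈ grid (m ^ 2), gridSum a b g ξ p = 0) ∧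
        (∀ q, house (ξ q : K) ≤ (m : ℝ) ^ (17 * m ^ 3)) ∧
        ∀ p ∈ grid (2 * m ^ 2),
          ClearedHouseLE (d ^ (6 * m ^ 3)) ((m : ℝ) ^ (34 * m ^ 3)) (gridSum a b g ξ p) := by
  obtain ⟨d, hd, hvalue⟩ := exists_eventually_clearedHouseLE_gridValue a b g
  refine ⟨d, hd, ?_⟩
  filter_upwards [hvalue, eventually_exists_gridSum_eq_zero K, eventually_ge_atTop 2]
    with m ⟨hdm, hm_value⟩ hsiegel hm
  have hm1 : (1 : ℝ) ≤ m := by exact_mod_cast one_le_two.trans hm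
  have hm2 : (2 : ℝ) ≤ m := by exact_mod_cast hm
  have hpow : (m : ℝ) ^ 5 ≤ (m : ℝ) ^ (5 * m ^ 3) :=
    pow_le_pow_right₀ hm1 (Nat.le_mul_of_pos_right 5 (by positivity))
  obtain ⟨ξ, hξ0, hzero, hξ⟩ := hsiegel a b g (pow_ne_zero (6 * m ^ 3) hd) (one_le_pow₀ hm1)
    fun p hp => hm_value p (grid_mono (by lia) hp)
  have hξ' (q) : house (ξ q : K) ≤ (m : ℝ) ^ (17 * m ^ 3) := calc
    house (ξ q : K) ≤ (m : ℝ) ^ 5 * (m : ℝ) ^ (12 * m ^ 3) := hξ q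
    _ ≤ (m : ℝ) ^ (5 * m ^ 3) * (m : ℝ) ^ (12 * m ^ 3) := by gcongr
    _ = (m : ℝ) ^ (17 * m ^ 3) := by ring
  refine ⟨hdm, ξ, hξ0, hzero, hξ', fun p hp =>
    (clearedHouseLE_gridSum hξ' (hm_value p hp)).mono ?_⟩
  have hcard : ((2 * m ^ 3 : ℕ) : ℝ) * m ≤ (m : ℝ) ^ 5 := calc
    ((2 * m ^ 3 : ℕ) : ℝ) * m = 2 * (m : ℝ) ^ 4 := by
      push_cast
      ring
    _ ≤ m * (m : ℝ) ^ 4 := by gcongr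
    _ = (m : ℝ) ^ 5 := by ring
  calc
    _ ≤ (m : ℝ) ^ (5 * m ^ 3) * ((m : ℝ) ^ (12 * m ^ 3) * (m : ℝ) ^ (17 * m ^ 3)) := by
      gcongr
      exact hcard.trans hpow
    _ = (m : ℝ) ^ (34 * m ^ 3) := by ring

lemma exists_eventually_exists_isAuxiliary (σ : K →+* ℝ) {a b g : K} (ha : 0 < σ a)
    (hg : σ g = σ a ^ σ b) :
    ∃ c, ∀ᶠ m : ℕ in atTop, ∃ P, IsAuxiliary (σ b) (Real.log (σ a)) c m P := by
  obtain ⟨d, hd, hcoeffs⟩ := exists_eventually_exists_coeffs a b g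
  set h := Module.finrank ℚ K
  have hh : 0 < h := Module.finrank_pos
  refine ⟨40 * h, ?_⟩
  filter_upwards [hcoeffs, eventually_ge_atTop 1] with m ⟨hdm, ξ, hξ0, hzero, hξ, hlarge⟩ hm
  have hm1 : (1 : ℝ) ≤ m := by exact_mod_cast hm
  have hpow {i : ℕ} (hi : i ≤ 40 * h) : (m : ℝ) ^ (i * m ^ 3) ≤ (m : ℝ) ^ (40 * h * m ^ 3) :=
    pow_le_pow_right₀ hm1 (Nat.mul_le_mul_right _ hi)
  refine ⟨conjugatePoly σ ξ, conjugatePoly_ne_zero σ hξ0, fun l => ofFn_degree_lt _,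
    abs_coeff_conjugatePoly_le σ (by positivity) fun q => (hξ q).trans (hpow (by lia)),
    fun p hp => ?_, fun p hp hne => ?_⟩
  · rw [← map_gridSum ha hg, hzero p hp, map_zero]
  rw [← map_gridSum ha hg] at hne ⊢
  calc
    1 ≤ |((d ^ (6 * m ^ 3) : ℤ) : ℝ)| * |σ (gridSum a b g ξ p)| *
        ((m : ℝ) ^ (34 * m ^ 3)) ^ (h - 1) :=
      (hlarge p hp).one_le_mul_abs_embedding (pow_ne_zero _ hd) ((map_ne_zero σ).1 hne) σ
    _ ≤ (m : ℝ) ^ (6 * m ^ 3) * |σ (gridSum a b g ξ p)| * ((m : ℝ) ^ (34 * m ^ 3)) ^ (h - 1) := by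
      rw [Int.cast_pow, abs_pow]
      gcongr
    _ = (m : ℝ) ^ ((6 + 34 * (h - 1)) * m ^ 3) * |σ (gridSum a b g ξ p)| := by ring
    _ ≤ (m : ℝ) ^ (40 * h * m ^ 3) * |σ (gridSum a b g ξ p)| := by
      gcongr
      lia

lemma map_ne_rpow_of_irrational (σ : K →+* ℝ) {a b : K} (ha : 0 < σ a) (ha1 : σ a ≠ 1)
    (hb : Irrational (σ b)) (g : K) : σ g ≠ σ a ^ σ b := by
  intro hg
  obtain ⟨c, hc⟩ := exists_eventually_exists_isAuxiliary σ ha hg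
  obtain ⟨m, ⟨P, hP⟩, hm⟩ := (hc.and <|
    eventually_not_isAuxiliary hb (Real.log_ne_zero_of_pos_of_ne_one ha ha1) c).exists
  exact hm P hP

end Existence

/-- Gelfond–Schneider theorem (real form): if `α` is a positive real algebraic
number with `α ≠ 1` and `β` is a real algebraic irrational number, then
`α ^ β` (real power) is transcendental over `ℚ`. -/
theorem gelfond_schneider (α β : ℝ) (hα : IsAlgebraic ℚ α) (hα0 : 0 < α) (hα1 : α ≠ 1)
    (hβ : IsAlgebraic ℚ β) (hβirr : Irrational β) :
    Transcendental ℚ (α ^ β) := by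
  intro hγ
  let K := IntermediateField.adjoin ℚ ({α, β, α ^ β} : Set ℝ)
  have : FiniteDimensional ℚ K := IntermediateField.finiteDimensional_adjoin <| by
    rintro x (rfl | rfl | rfl)
    exacts [hα.isIntegral, hβ.isIntegral, hγ.isIntegral]
  have : NumberField K := { }
  have hmem {x : ℝ} (hx : x ∈ ({α, β, α ^ β} : Set ℝ)) : x ∈ K :=
    IntermediateField.subset_adjoin ℚ _ hx
  exact map_ne_rpow_of_irrational (algebraMap K ℝ) (a := ⟨α, hmem (by simp)⟩)
    (b := ⟨β, hmem (by simp)⟩) hα0 hα1 hβirr ⟨α ^ β, hmem (by simp)⟩ rfl
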